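/- Let A be an n-by-n reciprocal matrix. The set of positive n-vectors that are efficient for A is a closed subset of ℝ^n; equivalently, the set of positive n-vectors that are not efficient for A is open in the set of positive n-vectors. -/

import Mathlib

/-- An n-by-n positive matrix is reciprocal if `A j i = 1 / A i j` for all `i, j`. -/
def Reciprocal {n : ℕ} (A : Matrix (Fin n) (Fin n) ℝ) : Prop :=
  (∀ i j, 0 < A i j) ∧ ∀ i j, A j i = 1 / A i j

/-- A positive vector `w` is efficient for a reciprocal matrix `A` if every positive
vector `v` with `|v i / v j - A i j| ≤ |w i / w j - A i j|` entrywise is a positive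
scalar multiple of `w`. -/
def Efficient {n : ℕ} (A : Matrix (Fin n) (Fin n) ℝ) (w : Fin n → ℝ) : Prop :=
  ∀ v : Fin n → ℝ, (∀ i, 0 < v i) →
    (∀ i j, |v i / v j - A i j| ≤ |w i / w j - A i j|) →
    ∃ c : ℝ, 0 < c ∧ v = fun i => c * w i

/-!
A positive vector `w` is inefficient exactly when there is a nonempty proper subset `S` of the
indices such that increasing `w` on `S` moves every ratio `w i / w j` with exactly one index in `S`
towards its target `A i j`, none of them being on target already. If `v` witnesses inefficiency,
then a superlevel set of `v / w` is such an `S`: passing from `w` to `v` moves each of these ratios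
strictly, and a strict move that does not increase the distance to the target must start on the
correct side of it. Conversely, scaling `w` on `S` by a factor slightly above `1` overshoots no
target. For a fixed `S` the condition consists of finitely many strict inequalities, so it is open
in `w`.
-/

section Ratios

variable {ι : Type*} {A : Matrix ι ι ℝ} {S : Set ι} {v w : ι → ℝ}

theorem lt_of_lt_of_abs_sub_le_abs_sub {G : Type*} [AddCommGroup G] [LinearOrder G]
    [IsOrderedAddMonoid G] {a x y : G} (hxy : x < y) (h : |y - a| ≤ |x - a|) : x < a := by
  by_contra! hax
  rw [abs_of_nonneg (sub_nonneg.2 (hax.trans hxy.le)), abs_of_nonneg (sub_nonneg.2 hax)] at h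
  exact hxy.not_ge ((sub_le_sub_iff_right a).1 h)

theorem lt_of_gt_of_abs_sub_le_abs_sub {G : Type*} [AddCommGroup G] [LinearOrder G]
    [IsOrderedAddMonoid G] {a x y : G} (hyx : y < x) (h : |y - a| ≤ |x - a|) : a < x := by
  refine neg_lt_neg_iff.1 (lt_of_lt_of_abs_sub_le_abs_sub (neg_lt_neg hyx) ?_)
  simpa only [← neg_sub', abs_neg] using h

theorem exists_pos_eq_const_mul_iff (hv : ∀ i, 0 < v i) (hw : ∀ i, 0 < w i) :
    (∃ c : ℝ, 0 < c ∧ v = fun i => c * w i) ↔ ∀ p q, v p / w p ≤ v q / w q := by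
  constructor
  · rintro ⟨c, -, rfl⟩ p q
    simp only [mul_div_cancel_right₀ c (hw _).ne', le_refl]
  · intro h
    obtain hι | ⟨⟨p⟩⟩ := isEmpty_or_nonempty ι
    · exact ⟨1, one_pos, Subsingleton.elim _ _⟩
    · refine ⟨v p / w p, div_pos (hv p) (hw p), funext fun i => ?_⟩
      rw [(h p i).antisymm (h i p), div_mul_cancel₀ _ (hw i).ne']

/-- `S` is a nonempty proper subset of the indices such that, for `w` positive, every ratio
`w i / w j` with `i ∈ S`, `j ∉ S` lies strictly below its target `A i j` and every ratio `w j / w i`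
strictly above `A j i`; increasing `w` slightly on `S` then improves all these ratios. Both
conditions are stated without division, so that they are visibly open in `w`. -/
structure IsImprovingCut (A : Matrix ι ι ℝ) (w : ι → ℝ) (S : Set ι) : Prop where
  nonempty : S.Nonempty
  exists_notMem : ∃ j, j ∉ S
  lt_and_lt : ∀ i ∈ S, ∀ j ∉ S, w i < A i j * w j ∧ A j i * w i < w j

theorem isImprovingCut_iff : IsImprovingCut A w S ↔ S.Nonempty ∧ (∃ j, j ∉ S) ∧
    ∀ i ∈ S, ∀ j ∉ S, w i < A i j * w j ∧ A j i * w i < w j :=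
  ⟨fun ⟨hne, hproper, hlt⟩ => ⟨hne, hproper, hlt⟩, fun ⟨hne, hproper, hlt⟩ => ⟨hne, hproper, hlt⟩⟩

theorem isOpen_setOf_isImprovingCut [Finite ι] (A : Matrix ι ι ℝ) (S : Set ι) :
    IsOpen {w | IsImprovingCut A w S} := by
  simp only [isImprovingCut_iff, Set.ofPred_and, Set.ofPred_forall]
  refine isOpen_const.inter (isOpen_const.inter ?_)
  refine isOpen_iInter_of_finite fun i => isOpen_iInter_of_finite fun _ =>
    isOpen_iInter_of_finite fun j => isOpen_iInter_of_finite fun _ => ?_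
  exact (isOpen_lt (by fun_prop) (by fun_prop)).inter (isOpen_lt (by fun_prop) (by fun_prop))

theorem isImprovingCut_superlevel_div (hv : ∀ i, 0 < v i) (hw : ∀ i, 0 < w i)
    (hle : ∀ i j, |v i / v j - A i j| ≤ |w i / w j - A i j|) {p q : ι}
    (hqp : v q / w q < v p / w p) : IsImprovingCut A w {i | v q / w q < v i / w i} where
  nonempty := ⟨p, hqp⟩
  exists_notMem := ⟨q, by simp only [Set.mem_ofPred_eq, lt_irrefl, not_false_eq_true]⟩
  lt_and_lt i hi j hj := by
    rw [Set.mem_ofPred_eq] at hi hj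
    have hji : v j / w j < v i / w i := (not_lt.1 hj).trans_lt hi
    rw [div_lt_div_iff₀ (hw j) (hw i)] at hji
    have hup : w i / w j < v i / v j := by
      rw [div_lt_div_iff₀ (hw j) (hv j)]; linarith
    have hdown : v j / v i < w j / w i := by
      rw [div_lt_div_iff₀ (hv i) (hw i)]; linarith
    exact ⟨(div_lt_iff₀ (hw j)).1 (lt_of_lt_of_abs_sub_le_abs_sub hup (hle i j)),
      (lt_div_iff₀ (hw i)).1 (lt_of_gt_of_abs_sub_le_abs_sub hdown (hle j i))⟩

/-- The vector `w` with its entries indexed by `S` multiplied by `t`; for `t` slightly above `1`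
and `S` an improving cut, it witnesses that `w` is not efficient. -/
noncomputable def scaleOn (S : Set ι) (t : ℝ) (w : ι → ℝ) : ι → ℝ :=
  S.mulIndicator (fun _ => t) * w

theorem scaleOn_of_mem {i : ι} (hi : i ∈ S) (t : ℝ) (w : ι → ℝ) :
    scaleOn S t w i = t * w i := by
  rw [scaleOn, Pi.mul_apply, Set.mulIndicator_of_mem hi]

theorem scaleOn_of_notMem {i : ι} (hi : i ∉ S) (t : ℝ) (w : ι → ℝ) :
    scaleOn S t w i = w i := by
  rw [scaleOn, Pi.mul_apply, Set.mulIndicator_of_notMem hi, one_mul]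

theorem scaleOn_one (S : Set ι) (w : ι → ℝ) : scaleOn S 1 w = w := by
  rw [scaleOn, Set.mulIndicator_one]
  exact one_mul w

theorem scaleOn_pos {t : ℝ} (ht : 0 < t) (hw : ∀ i, 0 < w i) (i : ι) : 0 < scaleOn S t w i := by
  by_cases hi : i ∈ S
  · rw [scaleOn_of_mem hi]
    exact mul_pos ht (hw i)
  · rw [scaleOn_of_notMem hi]
    exact hw i

theorem continuous_scaleOn (S : Set ι) (w : ι → ℝ) : Continuous fun t => scaleOn S t w := by
  refine continuous_pi fun i => ?_
  by_cases hi : i ∈ S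
  · simpa only [scaleOn_of_mem hi] using continuous_mul_const (w i)
  · simpa only [scaleOn_of_notMem hi] using continuous_const

namespace IsImprovingCut

theorem exists_one_lt_scaleOn [Finite ι] (hS : IsImprovingCut A w S) :
    ∃ t : ℝ, 1 < t ∧ IsImprovingCut A (scaleOn S t w) S := by
  have hnhds : ∀ᶠ t in nhds (1 : ℝ), IsImprovingCut A (scaleOn S t w) S :=
    ((isOpen_setOf_isImprovingCut A S).preimage (continuous_scaleOn S w)).mem_nhds
      (by simpa only [Set.mem_preimage, Set.mem_ofPred_eq, scaleOn_one] using hS)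
  exact hnhds.exists_gt

theorem abs_scaleOn_div_sub_le {t : ℝ} (hS : IsImprovingCut A (scaleOn S t w) S) (ht : 1 ≤ t)
    (hw : ∀ i, 0 < w i) (i j : ι) :
    |scaleOn S t w i / scaleOn S t w j - A i j| ≤ |w i / w j - A i j| := by
  have ht₀ : 0 < t := one_pos.trans_le ht
  by_cases hi : i ∈ S <;> by_cases hj : j ∈ S
  · rw [scaleOn_of_mem hi, scaleOn_of_mem hj, mul_div_mul_left _ _ ht₀.ne']
  · have hcut := (hS.lt_and_lt i hi j hj).1
    rw [scaleOn_of_mem hi, scaleOn_of_notMem hj] at hcut ⊢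
    have hmono : w i / w j ≤ t * w i / w j :=
      div_le_div_of_nonneg_right (le_mul_of_one_le_left (hw i).le ht) (hw j).le
    have hbelow : t * w i / w j ≤ A i j := (div_le_iff₀ (hw j)).2 hcut.le
    exact Set.abs_sub_left_of_mem_uIcc (Set.mem_uIcc_of_ge hmono hbelow)
  · have hcut := (hS.lt_and_lt j hj i hi).2
    rw [scaleOn_of_notMem hi, scaleOn_of_mem hj] at hcut ⊢
    have hmono : w i / (t * w j) ≤ w i / w j :=
      div_le_div_of_nonneg_left (hw i).le (hw j) (le_mul_of_one_le_left (hw j).le ht)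
    have habove : A i j ≤ w i / (t * w j) := (le_div_iff₀ (mul_pos ht₀ (hw j))).2 hcut.le
    exact Set.abs_sub_left_of_mem_uIcc (Set.mem_uIcc_of_le habove hmono)
  · rw [scaleOn_of_notMem hi, scaleOn_of_notMem hj]

end IsImprovingCut

end Ratios

section Efficiency

variable {n : ℕ} {A : Matrix (Fin n) (Fin n) ℝ} {w : Fin n → ℝ}

theorem not_efficient_iff_exists_div_lt_div (hw : ∀ i, 0 < w i) :
    ¬ Efficient A w ↔ ∃ v : Fin n → ℝ, (∀ i, 0 < v i) ∧
      (∀ i j, |v i / v j - A i j| ≤ |w i / w j - A i j|) ∧ ∃ p q, v q / w q < v p / w p := by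
  simp only [Efficient, not_forall, exists_prop]
  refine exists_congr fun v => and_congr_right fun hv => and_congr_right fun _ => ?_
  simp only [exists_pos_eq_const_mul_iff hv hw, not_forall, not_le]

theorem not_efficient_iff_exists_isImprovingCut (hw : ∀ i, 0 < w i) :
    ¬ Efficient A w ↔ ∃ S, IsImprovingCut A w S := by
  rw [not_efficient_iff_exists_div_lt_div hw]
  constructor
  · rintro ⟨v, hv, hle, p, q, hqp⟩
    exact ⟨_, isImprovingCut_superlevel_div hv hw hle hqp⟩
  · rintro ⟨S, hS⟩
    obtain ⟨t, ht, hSt⟩ := hS.exists_one_lt_scaleOn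
    obtain ⟨p, hp⟩ := hS.nonempty
    obtain ⟨q, hq⟩ := hS.exists_notMem
    refine ⟨scaleOn S t w, scaleOn_pos (one_pos.trans ht) hw,
      hSt.abs_scaleOn_div_sub_le ht.le hw, p, q, ?_⟩
    rwa [scaleOn_of_mem hp, scaleOn_of_notMem hq, div_self (hw q).ne',
      mul_div_cancel_right₀ _ (hw p).ne']

theorem isOpen_setOf_pos_and_not_efficient (A : Matrix (Fin n) (Fin n) ℝ) :
    IsOpen {w : Fin n → ℝ | (∀ i, 0 < w i) ∧ ¬ Efficient A w} := by
  have hcuts : {w : Fin n → ℝ | (∀ i, 0 < w i) ∧ ¬ Efficient A w} =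
      (⋂ i, {w | 0 < w i}) ∩ ⋃ S, {w | IsImprovingCut A w S} := by
    ext w
    simp only [Set.mem_inter_iff, Set.mem_iInter, Set.mem_iUnion, Set.mem_ofPred_eq]
    exact and_congr_right not_efficient_iff_exists_isImprovingCut
  rw [hcuts]
  exact (isOpen_iInter_of_finite fun i => isOpen_lt continuous_const (continuous_apply i)).inter
    (isOpen_iUnion (isOpen_setOf_isImprovingCut A))

end Efficiency

theorem stmt_5_general {n : ℕ} (A : Matrix (Fin n) (Fin n) ℝ) :
    IsClosed {w : {v : Fin n → ℝ // ∀ i, 0 < v i} | Efficient A w.val} ∧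
      IsOpen {w : Fin n → ℝ | (∀ i, 0 < w i) ∧ ¬ Efficient A w} := by
  have hopen := isOpen_setOf_pos_and_not_efficient A
  refine ⟨isOpen_compl_iff.1 ?_, hopen⟩
  convert hopen.preimage (continuous_subtype_val (p := fun v : Fin n → ℝ => ∀ i, 0 < v i)) using 1
  ext w
  exact (and_iff_right w.2).symm

/-- The set of efficient vectors for `A` is closed within the set of positive vectors;
equivalently, the set of positive vectors that are not efficient for `A` is open. -/
theorem stmt_5 {n : ℕ} (A : Matrix (Fin n) (Fin n) ℝ) (hA : Reciprocal A) :
    IsClosed {w : {v : Fin n → ℝ // ∀ i, 0 < v i} | Efficient A w.val} ∧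
      IsOpen {w : Fin n → ℝ | (∀ i, 0 < w i) ∧ ¬ Efficient A w} :=
  stmt_5_general A
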